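/- Suppose ‖T_i‖ < 1/2 for all 1 ≤ i ≤ m, each T_i is a scalar multiple of an orthogonal matrix, and Σ_{i=1}^m |det(T_i)|^2 > 1. Then for Lebesgue-almost every a = (a_1,…,a_m) ∈ ℝ^{md}, the self-affine set K^a has non-empty interior. -/

import Mathlib

open MeasureTheory

noncomputable section

namespace SelfAffine

variable {d m : ℕ}

/-- Euclidean operator norm of a `d × d` real matrix. -/
def opNorm (A : Matrix (Fin d) (Fin d) ℝ) : ℝ :=
  ‖Matrix.toEuclideanCLM (𝕜 := ℝ) A‖

/-- smallest singular value of an invertible matrix, via `α_d(A) = ‖A⁻¹‖⁻¹`. -/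
def alphaMin (A : Matrix (Fin d) (Fin d) ℝ) : ℝ := (opNorm A⁻¹)⁻¹

/-- `T_I = T_{i_1} ⋯ T_{i_n}` for a finite word `I ∈ Σ_n`. -/
def wordProd (T : Fin m → Matrix (Fin d) (Fin d) ℝ) {n : ℕ} (I : Fin n → Fin m) :
    Matrix (Fin d) (Fin d) ℝ :=
  (List.ofFn fun k => T (I k)).prod

/-- the coding map `π^a : Σ → ℝ^d`, `π^a(x) = ∑_{n ≥ 0} T_{x|n} a_{x_{n+1}}`. -/
def codingMap (T : Fin m → Matrix (Fin d) (Fin d) ℝ)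
    (a : Fin m → EuclideanSpace ℝ (Fin d)) (x : ℕ → Fin m) : EuclideanSpace ℝ (Fin d) :=
  ∑' n : ℕ, Matrix.toEuclideanCLM (𝕜 := ℝ) (wordProd T fun k : Fin n => x (k : ℕ)) (a (x n))

/-- the self-affine set `K^a = π^a(Σ)`. -/
def attractor (T : Fin m → Matrix (Fin d) (Fin d) ℝ)
    (a : Fin m → EuclideanSpace ℝ (Fin d)) : Set (EuclideanSpace ℝ (Fin d)) :=
  Set.range (codingMap T a)

/-!
Let `L_x` be the linear map sending the translations `a` to the point coded by `x`, let `μ` be a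
Bernoulli measure on the symbolic space, and let `μ_a` be its image under `x ↦ L_x a`. When `a` is a
standard Gaussian vector, the mean of `|charFun μ_a ξ| ^ 2` is
`∬ exp (-‖(L_x - L_y)^* ξ‖ ^ 2 / 2) dμ(x) dμ(y)`. If `x` and `y` share exactly their first `n`
letters, then `L_x - L_y` is the product of `n` linear parts applied to a difference of codings with
distinct first letters, which is bounded below because the norms are less than `1 / 2`. Hence
`‖(L_x - L_y)^* ξ‖` is at least a constant times `‖ξ‖ ∏_{k < n} r (x k)`, where `r i` is the least
singular value of the `i`-th linear part. Choosing the weights of `μ` proportional to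
`r i ^ (2 * d)` makes the double integral `O((1 + ‖ξ‖) ^ (-2 s))` for some `s > d`, so by
Cauchy–Schwarz and Fubini `charFun μ_a` is integrable for almost every `a`. Then `μ_a` has a
continuous density, and its support, contained in the attractor, has interior.
-/

section FourierInversion

open FourierTransform
open scoped ContDiff SchwartzMap

variable {E : Type*} [NormedAddCommGroup E] [InnerProductSpace ℝ E] [FiniteDimensional ℝ E]
  [MeasurableSpace E] [BorelSpace E] {ν : Measure E} [IsFiniteMeasure ν]

lemma integral_schwartzMap_eq_integral_mul_fourierInv_charFun
    (hν : Integrable fun ξ => charFun ν ((-(2 * Real.pi)) • ξ)) (g : 𝓢(E, ℂ)) :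
    ∫ x, g x ∂ν = ∫ x, g x * 𝓕⁻ (fun ξ => charFun ν ((-(2 * Real.pi)) • ξ)) x := by
  have hcharFun : (fun ξ => charFun ν ((-(2 * Real.pi)) • ξ)) =
      VectorFourier.fourierIntegral Real.fourierChar ν (innerₗ E) 1 := by
    ext ξ
    rw [charFun_eq_fourierIntegral', smul_smul]
    field_simp
    simp
  have hinversion : (g : E → ℂ) = 𝓕 (𝓕⁻ g : 𝓢(E, ℂ)) := by simp
  calc ∫ x, g x ∂ν
      = ∫ x, 𝓕 ((𝓕⁻ g : 𝓢(E, ℂ)) : E → ℂ) x • (1 : E → ℂ) x ∂ν := by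
        conv_lhs => rw [hinversion]
        simp only [SchwartzMap.fourier_coe, Pi.one_apply, smul_eq_mul, mul_one]
    _ = ∫ ξ, (𝓕⁻ g : 𝓢(E, ℂ)) ξ * charFun ν ((-(2 * Real.pi)) • ξ) := by
        have := VectorFourier.integral_fourierIntegral_smul_eq_flip (μ := volume) (ν := ν)
          (L := innerₗ E) Real.continuous_fourierChar continuous_inner
          (𝓕⁻ g : 𝓢(E, ℂ)).integrable (g := (1 : E → ℂ)) (integrable_const 1)
        rw [flip_innerₗ, ← hcharFun] at this
        exact this
    _ = ∫ x, g x * 𝓕⁻ (fun ξ => charFun ν ((-(2 * Real.pi)) • ξ)) x := by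
        have := VectorFourier.integral_fourierIntegral_smul_eq_flip (μ := volume) (ν := volume)
          (L := -innerₗ E) Real.continuous_fourierChar continuous_inner.neg
          g.integrable hν
        rw [SchwartzMap.fourierInv_coe]
        have hflip : (-innerₗ E).flip = -innerₗ E := by
          ext x y; simp [real_inner_comm]
        rw [hflip] at this
        exact this

lemma interior_nonempty_of_integrable_charFun [NeZero ν] (hν : Integrable (charFun ν))
    {K : Set E} (hK : IsClosed K) (hνK : ν Kᶜ = 0) : (interior K).Nonempty := by
  set φ : E → ℂ := fun ξ => charFun ν ((-(2 * Real.pi)) • ξ) with hφdef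
  have hφ : Integrable φ := hν.comp_smul (by simp [Real.pi_ne_zero])
  have hφcont : Continuous φ := by fun_prop
  have hinvcont : Continuous (𝓕⁻ φ) :=
    VectorFourier.fourierIntegral_continuous Real.continuous_fourierChar continuous_inner.neg hφ
  by_contra hne
  rw [Set.not_nonempty_iff_eq_empty, interior_eq_empty_iff_dense_compl] at hne
  have hae : ∀ᵐ x, x ∈ Kᶜ → 𝓕⁻ φ x = 0 := by
    refine hK.isOpen_compl.ae_eq_zero_of_integral_contDiff_smul_eq_zero
      (hinvcont.locallyIntegrable.locallyIntegrableOn _) fun g hg hgc hgK => ?_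
    have hgc' : HasCompactSupport (fun x => (g x : ℂ)) := hgc.comp_left Complex.ofReal_zero
    have hg' : ContDiff ℝ ∞ (fun x => (g x : ℂ)) := Complex.ofRealCLM.contDiff.comp hg
    have hparseval :=
      integral_schwartzMap_eq_integral_mul_fourierInv_charFun hφ (hgc'.toSchwartzMap hg')
    have hzero : ∀ᵐ x ∂ν, (g x : ℂ) = 0 := by
      filter_upwards [measure_eq_zero_iff_ae_notMem.1 hνK] with x hx
      rw [image_eq_zero_of_notMem_tsupport fun h => hx (hgK h), Complex.ofReal_zero]
    calc ∫ x, g x • 𝓕⁻ φ x = ∫ x, (g x : ℂ) ∂ν := hparseval.symm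
      _ = 0 := integral_eq_zero_of_ae hzero
  have heqOn : Set.EqOn (𝓕⁻ φ) 0 Kᶜ :=
    Measure.eqOn_open_of_ae_eq (μ := volume)
      ((ae_restrict_iff' hK.isOpen_compl.measurableSet).2 hae)
      hK.isOpen_compl hinvcont.continuousOn continuousOn_const
  have hinv : 𝓕⁻ φ = 0 := Continuous.ext_on hne hinvcont continuous_const heqOn
  have hzero : φ = 0 := by
    have hfourier : 𝓕 φ = 0 := by
      ext ξ
      rw [← neg_neg ξ, ← Real.fourierInv_eq_fourier_neg, hinv, Pi.zero_apply, Pi.zero_apply]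
    rw [← hφcont.fourierInv_fourier_eq hφ (hfourier ▸ integrable_zero _ _ _), hfourier]
    ext
    simp only [Real.fourierInv_eq, Pi.zero_apply, smul_zero, integral_zero]
  have hmass : φ 0 = ν.real Set.univ := by simp [hφdef, charFun_zero]
  rw [hzero, Pi.zero_apply, eq_comm, Complex.ofReal_eq_zero] at hmass
  exact measureReal_univ_ne_zero hmass

end FourierInversion

section Gaussian

open ProbabilityTheory

variable {H : Type*} [NormedAddCommGroup H] [InnerProductSpace ℝ H] [FiniteDimensional ℝ H]
  [MeasurableSpace H] [BorelSpace H]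

lemma integrable_exp_neg_half_norm_sq : Integrable fun v : H => Real.exp (-(‖v‖ ^ 2 / 2)) := by
  have hcexp := (GaussianFourier.integrable_cexp_neg_mul_sq_norm_add (V := H) (b := 1 / 2)
    (by norm_num) 0 0).norm
  refine hcexp.congr (.of_forall fun v => ?_)
  simp only [zero_mul, add_zero]
  rw [Complex.norm_exp]
  norm_num [← Complex.ofReal_pow]
  ring

lemma integral_exp_neg_half_norm_sq_mul_cexp_inner (t : H) :
    ∫ v : H, (Real.exp (-(‖v‖ ^ 2 / 2)) : ℂ) * Complex.exp (inner ℝ v t * Complex.I) =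
      (Real.pi / (1 / 2) : ℂ) ^ (Module.finrank ℝ H / 2 : ℂ) * charFun (stdGaussian H) t := by
  have hfourier := GaussianFourier.integral_cexp_neg_mul_sq_norm_add (V := H) (b := 1 / 2)
    (by norm_num) Complex.I t
  rw [charFun_stdGaussian]
  convert hfourier using 3 with v
  · rw [Complex.ofReal_exp, ← Complex.exp_add, real_inner_comm]
    push_cast
    ring_nf
  · rw [Complex.I_sq]
    ring_nf

lemma volume_absolutelyContinuous_stdGaussian : (volume : Measure H) ≪ stdGaussian H := by
  set γ : Measure H := volume.withDensity fun v => ENNReal.ofReal (Real.exp (-(‖v‖ ^ 2 / 2)))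
    with hγ
  have hγfin : IsFiniteMeasure γ :=
    isFiniteMeasure_withDensity_ofReal integrable_exp_neg_half_norm_sq.2
  obtain ⟨C, hC⟩ : ∃ C : ℂ, ∀ t, charFun γ t = C * charFun (stdGaussian H) t := by
    refine ⟨(Real.pi / (1 / 2) : ℂ) ^ (Module.finrank ℝ H / 2 : ℂ), fun t => ?_⟩
    rw [← integral_exp_neg_half_norm_sq_mul_cexp_inner, charFun_apply, hγ,
      integral_withDensity_eq_integral_toReal_smul (by fun_prop)
        (.of_forall fun _ => ENNReal.ofReal_lt_top)]
    simp only [ENNReal.toReal_ofReal (Real.exp_pos _).le, Complex.real_smul]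
  have hCmass : C = γ.real Set.univ := by simpa [charFun_zero] using (hC 0).symm
  have hγeq : γ = γ Set.univ • stdGaussian H := by
    have := (stdGaussian H).smul_finite (measure_ne_top γ Set.univ)
    refine Measure.ext_of_charFun (funext fun t => ?_)
    rw [hC, hCmass, charFun_apply, charFun_apply, integral_smul_measure, Complex.real_smul,
      Measure.real]
  have hvolume : volume ≪ γ := withDensity_absolutelyContinuous' (by fun_prop)
    (.of_forall fun v => (ENNReal.ofReal_pos.2 (Real.exp_pos _)).ne')
  exact hvolume.trans (hγeq ▸ Measure.smul_absolutelyContinuous)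

end Gaussian

section RandomProjection

open ProbabilityTheory
open scoped ComplexConjugate

section Measurability

variable {E H Ω : Type*} [NormedAddCommGroup E] [InnerProductSpace ℝ E] [MeasurableSpace E]
  [BorelSpace E] [MeasurableSpace H] [MeasurableSpace Ω] {X : Ω → H → E}

lemma charFun_map_apply (hX : Measurable (Function.uncurry X)) (μ : Measure Ω) (h : H) (ξ : E) :
    charFun (μ.map fun x => X x h) ξ = ∫ x, Complex.exp (inner ℝ (X x h) ξ * Complex.I) ∂μ := by
  have hXh : Measurable fun x => X x h := hX.comp measurable_prodMk_right
  rw [charFun_apply, integral_map hXh.aemeasurable (by fun_prop)]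

variable [SecondCountableTopology E]

lemma measurable_cexp_inner (hX : Measurable (Function.uncurry X)) :
    Measurable fun p : (H × E) × Ω => Complex.exp (inner ℝ (X p.2 p.1.1) p.1.2 * Complex.I) := by
  have : Measurable fun p : (H × E) × Ω => X p.2 p.1.1 :=
    hX.comp (measurable_snd.prodMk (measurable_fst.comp measurable_fst))
  fun_prop

lemma stronglyMeasurable_charFun_map (hX : Measurable (Function.uncurry X)) (μ : Measure Ω)
    [SFinite μ] : StronglyMeasurable fun p : H × E => charFun (μ.map fun x => X x p.1) p.2 := by
  simp only [charFun_map_apply hX]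
  exact (measurable_cexp_inner hX).stronglyMeasurable.integral_prod_right'

end Measurability

lemma integral_norm_le_sqrt_integral_norm_sq {Ω F : Type*} [MeasurableSpace Ω] {μ : Measure Ω}
    [IsProbabilityMeasure μ] [NormedAddCommGroup F] {f : Ω → F} (hf : MemLp f 2 μ) :
    ∫ x, ‖f x‖ ∂μ ≤ √(∫ x, ‖f x‖ ^ 2 ∂μ) := by
  have hvariance := variance_eq_sub hf.norm
  refine Real.le_sqrt_of_sq_le (sub_nonneg.1 ?_)
  exact hvariance ▸ variance_nonneg _ _

variable {E H Ω : Type*} [NormedAddCommGroup E] [InnerProductSpace ℝ E] [FiniteDimensional ℝ E]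
  [NormedAddCommGroup H] [InnerProductSpace ℝ H] [FiniteDimensional ℝ H]
  [MeasurableSpace H] [BorelSpace H]

lemma integral_cexp_inner_mul_conj_stdGaussian (M N : H →L[ℝ] E) (ξ : E) :
    ∫ h, Complex.exp (inner ℝ (M h) ξ * Complex.I) *
        conj (Complex.exp (inner ℝ (N h) ξ * Complex.I)) ∂stdGaussian H =
      Real.exp (-‖(M - N).adjoint ξ‖ ^ 2 / 2) := by
  have hcharFun := charFun_stdGaussian ((M - N).adjoint ξ)
  rw [charFun_apply] at hcharFun
  push_cast
  rw [← hcharFun]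
  refine integral_congr_ae (.of_forall fun h => ?_)
  simp only [← Complex.exp_conj, ← Complex.exp_add, ContinuousLinearMap.adjoint_inner_right,
    _root_.sub_apply, inner_sub_left, map_mul, Complex.conj_ofReal, Complex.conj_I,
    Complex.ofReal_sub]
  ring_nf

variable [MeasurableSpace E] [BorelSpace E] [MeasurableSpace Ω] {μ : Measure Ω}
  [IsProbabilityMeasure μ] {L : Ω → H →L[ℝ] E}

lemma integral_norm_charFun_map_sq_stdGaussian
    (hL : Measurable (Function.uncurry fun x => (L x : H → E))) (ξ : E) :
    ∫ h, ‖charFun (μ.map fun x => L x h) ξ‖ ^ 2 ∂stdGaussian H =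
      ∫ p : Ω × Ω, Real.exp (-‖(L p.1 - L p.2).adjoint ξ‖ ^ 2 / 2) ∂μ.prod μ := by
  set e : H → Ω → ℂ := fun h x => Complex.exp (inner ℝ (L x h) ξ * Complex.I) with he
  have hemeas : Measurable (Function.uncurry e) := (measurable_cexp_inner hL).comp
    ((measurable_fst.prodMk measurable_const).prodMk measurable_snd)
  have hsq (h : H) : ((‖charFun (μ.map fun x => L x h) ξ‖ ^ 2 : ℝ) : ℂ) =
      ∫ p : Ω × Ω, e h p.1 * conj (e h p.2) ∂μ.prod μ := by
    rw [integral_prod_mul (e h) fun x => conj (e h x), integral_conj, charFun_map_apply hL,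
      Complex.ofReal_pow, Complex.mul_conj']
  have hint : Integrable (Function.uncurry fun h (p : Ω × Ω) => e h p.1 * conj (e h p.2))
      ((stdGaussian H).prod (μ.prod μ)) := by
    have hmeas : Measurable (Function.uncurry fun h (p : Ω × Ω) => e h p.1 * conj (e h p.2)) :=
      (hemeas.comp (measurable_fst.prodMk (measurable_fst.comp measurable_snd))).mul
        (Complex.continuous_conj.measurable.comp
          (hemeas.comp (measurable_fst.prodMk (measurable_snd.comp measurable_snd))))
    refine .of_bound hmeas.aestronglyMeasurable 1 (.of_forall fun q => ?_)
    simp only [Function.uncurry, he, norm_mul, RCLike.norm_conj, Complex.norm_exp_ofReal_mul_I,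
      mul_one, le_refl]
  have hswap := integral_integral_swap hint
  simp only [← hsq] at hswap
  simp only [he, integral_cexp_inner_mul_conj_stdGaussian] at hswap
  exact_mod_cast hswap

lemma ae_integrable_charFun_map
    (hL : Measurable (Function.uncurry fun x => (L x : H → E))) {B s : ℝ}
    (hs : Module.finrank ℝ E < s)
    (hB : ∀ ξ, ∫ p : Ω × Ω, Real.exp (-‖(L p.1 - L p.2).adjoint ξ‖ ^ 2 / 2) ∂μ.prod μ ≤
      B * (1 + ‖ξ‖) ^ (-(2 * s))) :
    ∀ᵐ h, Integrable (charFun (μ.map fun x => L x h)) := by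
  refine volume_absolutelyContinuous_stdGaussian.ae_le ?_
  set F : H × E → ℂ := fun p => charFun (μ.map fun x => L x p.1) p.2
  have hFmeas : StronglyMeasurable F := stronglyMeasurable_charFun_map hL μ
  have hFmem (ξ : E) : MemLp (fun h => F (h, ξ)) 2 (stdGaussian H) := by
    refine .of_bound (hFmeas.comp_measurable measurable_prodMk_right).aestronglyMeasurable 1
      (.of_forall fun h => ?_)
    have hprob : IsProbabilityMeasure (μ.map fun x => L x h) :=
      Measure.isProbabilityMeasure_map (hL.comp measurable_prodMk_right).aemeasurable
    exact norm_charFun_le_one ξ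
  have hFint (ξ : E) : ∫ h, ‖F (h, ξ)‖ ∂stdGaussian H ≤ √B * (1 + ‖ξ‖) ^ (-s) :=
    calc ∫ h, ‖F (h, ξ)‖ ∂stdGaussian H
        ≤ √(∫ h, ‖F (h, ξ)‖ ^ 2 ∂stdGaussian H) := integral_norm_le_sqrt_integral_norm_sq (hFmem ξ)
      _ ≤ √(B * (1 + ‖ξ‖) ^ (-(2 * s))) :=
        Real.sqrt_le_sqrt ((integral_norm_charFun_map_sq_stdGaussian hL ξ).trans_le (hB ξ))
      _ = √B * (1 + ‖ξ‖) ^ (-s) := by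
        rw [Real.sqrt_mul' _ (by positivity), Real.sqrt_eq_rpow, Real.sqrt_eq_rpow,
          ← Real.rpow_mul (by positivity)]
        ring_nf
  have hint : Integrable F ((stdGaussian H).prod volume) := by
    rw [integrable_prod_iff' hFmeas.aestronglyMeasurable]
    refine ⟨.of_forall fun ξ => (hFmem ξ).integrable one_le_two, ?_⟩
    refine ((integrable_one_add_norm hs).const_mul √B).mono'
      hFmeas.norm.integral_prod_left'.aestronglyMeasurable (.of_forall fun ξ => ?_)
    rw [Real.norm_of_nonneg (by positivity)]
    exact hFint ξ
  exact hint.prod_right_ae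

end RandomProjection

section PrefixKernel

open ProbabilityTheory
open scoped ENNReal

lemma lintegral_prod_eval_infinitePi {κ : Type*} {X : κ → Type*} [∀ i, MeasurableSpace (X i)]
    (ν : ∀ i, Measure (X i)) [∀ i, IsProbabilityMeasure (ν i)] {f : ∀ i, X i → ℝ≥0∞}
    (hf : ∀ i, Measurable (f i)) (s : Finset κ) :
    ∫⁻ x, ∏ i ∈ s, f i (x i) ∂Measure.infinitePi ν = ∏ i ∈ s, ∫⁻ x, f i x ∂ν i := by
  refine (lintegral_prod_eq_prod_lintegral_of_indepFun s (fun i (x : ∀ i, X i) => f i (x i))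
    (iIndepFun_infinitePi hf) fun i => (hf i).comp (measurable_pi_apply i)).trans ?_
  exact Finset.prod_congr rfl fun i _ =>
    (measurePreserving_eval_infinitePi ν i).lintegral_comp (hf i)

variable {ι : Type*} [DecidableEq ι]

/-- The energy kernel `∑ₙ ∏_{k < n} c (x k)` on the symbolic space, the sum being over the lengths
`n` of the common prefixes of `x` and `y`; the terms with `x|n ≠ y|n` are encoded as products with a
vanishing factor. -/
def prefixKernel (c : ι → ℝ≥0∞) (x y : ℕ → ι) : ℝ≥0∞ :=
  ∑' n, ∏ k ∈ Finset.range n, if x k = y k then c (x k) else 0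

lemma prod_le_prefixKernel (c : ι → ℝ≥0∞) {x y : ℕ → ι} {n : ℕ} (hxy : ∀ k < n, x k = y k) :
    ∏ k ∈ Finset.range n, c (x k) ≤ prefixKernel c x y := by
  refine le_of_eq_of_le (Finset.prod_congr rfl fun k hk => ?_)
    (ENNReal.le_tsum (f := fun n => ∏ k ∈ Finset.range n, if x k = y k then c (x k) else 0) n)
  rw [if_pos (hxy k (Finset.mem_range.1 hk))]

lemma prefixKernel_self {c : ι → ℝ≥0∞} (hc : ∀ i, 1 ≤ c i) (x : ℕ → ι) :
    prefixKernel c x x = ∞ := by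
  refine top_unique ((ENNReal.tsum_const_eq_top_of_ne_zero one_ne_zero).ge.trans
    (ENNReal.tsum_le_tsum fun n => ?_))
  simp only [if_true]
  exact Finset.one_le_prod' fun k _ => hc (x k)

variable [Fintype ι] [MeasurableSpace ι] [MeasurableSingletonClass ι]

lemma lintegral_prefixKernel (ν : Measure ι) [IsProbabilityMeasure ν] (c : ι → ℝ≥0∞) :
    ∫⁻ p, prefixKernel c p.1 p.2
        ∂(Measure.infinitePi fun _ : ℕ => ν).prod (Measure.infinitePi fun _ => ν) =
      (1 - ∑ i, ν {i} ^ 2 * c i)⁻¹ := by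
  set μ : Measure (ℕ → ι) := Measure.infinitePi fun _ => ν
  have hfactor : Measurable fun q : ι × ι => if q.1 = q.2 then c q.1 else 0 := .of_discrete
  have hterm (n : ℕ) : Measurable fun p : (ℕ → ι) × (ℕ → ι) =>
      ∏ k ∈ Finset.range n, if p.1 k = p.2 k then c (p.1 k) else 0 :=
    Finset.measurable_fun_prod _ fun k _ =>
      hfactor.comp (f := fun p : (ℕ → ι) × (ℕ → ι) => (p.1 k, p.2 k)) (by fun_prop)
  have hinner (i : ι) : ∫⁻ j, (if i = j then c i else 0) ∂ν = ν {i} * c i := by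
    simp [lintegral_fintype, mul_comm]
  have houter : ∫⁻ i, ν {i} * c i ∂ν = ∑ i, ν {i} ^ 2 * c i := by
    rw [lintegral_fintype]
    exact Finset.sum_congr rfl fun i _ => by ring
  simp only [prefixKernel]
  rw [lintegral_tsum fun n => (hterm n).aemeasurable, ← ENNReal.tsum_geometric]
  refine tsum_congr fun n => ?_
  calc ∫⁻ p, ∏ k ∈ Finset.range n, (if p.1 k = p.2 k then c (p.1 k) else 0) ∂μ.prod μ
      = ∫⁻ x, ∫⁻ y, ∏ k ∈ Finset.range n, (if x k = y k then c (x k) else 0) ∂μ ∂μ :=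
        lintegral_prod _ (hterm n).aemeasurable
    _ = ∫⁻ x, ∏ k ∈ Finset.range n, ν {x k} * c (x k) ∂μ := by
        refine lintegral_congr fun x => ?_
        simp only [← hinner]
        exact lintegral_prod_eval_infinitePi (fun _ => ν)
          (f := fun k j => if x k = j then c (x k) else 0) (fun _ => .of_discrete) _
    _ = ∏ _ ∈ Finset.range n, ∫⁻ i, ν {i} * c i ∂ν :=
        lintegral_prod_eval_infinitePi (fun _ => ν) (f := fun _ i => ν {i} * c i)
          (fun _ => .of_discrete) _
    _ = (∑ i, ν {i} ^ 2 * c i) ^ n := by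
        rw [houter, Finset.prod_const, Finset.card_range]

end PrefixKernel

section Coding

variable {ι : Type*}

/-- The product `A (x 0) * ⋯ * A (x (n - 1))` along the first `n` letters of `x`. -/
def prefixProd {M : Type*} [Monoid M] (A : ι → M) (x : ℕ → ι) (n : ℕ) : M :=
  (List.ofFn fun k : Fin n => A (x k)).prod

lemma prefixProd_zero {M : Type*} [Monoid M] (A : ι → M) (x : ℕ → ι) : prefixProd A x 0 = 1 := by
  simp [prefixProd]

lemma prefixProd_succ {M : Type*} [Monoid M] (A : ι → M) (x : ℕ → ι) (n : ℕ) :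
    prefixProd A x (n + 1) = A (x 0) * prefixProd A (fun k => x (k + 1)) n := by
  simp [prefixProd, List.ofFn_succ]

lemma continuous_prefixProd {M : Type*} [Monoid M] [TopologicalSpace M] [ContinuousMul M]
    [TopologicalSpace ι] [DiscreteTopology ι] (A : ι → M) (n : ℕ) :
    Continuous fun x => prefixProd A x n := by
  induction n with
  | zero => simpa only [prefixProd_zero] using continuous_const
  | succ n ih =>
    simp only [prefixProd_succ]
    exact ((continuous_of_discreteTopology (f := A)).comp (continuous_apply 0)).mul
      (ih.comp (f := fun (x : ℕ → ι) k => x (k + 1)) (by fun_prop))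

variable [Fintype ι]

variable {E : Type*} [NormedAddCommGroup E] [NormedSpace ℝ E]

lemma norm_prefixProd_le (A : ι → E →L[ℝ] E) (x : ℕ → ι) (n : ℕ) :
    ‖prefixProd A x n‖ ≤ ‖A‖ ^ n := by
  induction n generalizing x with
  | zero => simpa only [prefixProd_zero, pow_zero] using! ContinuousLinearMap.norm_id_le
  | succ n ih =>
    rw [prefixProd_succ, pow_succ']
    exact (norm_mul_le _ _).trans
      (mul_le_mul (norm_le_pi_norm A _) (ih _) (norm_nonneg _) (norm_nonneg _))

/-- The coding map of the affine maps `v ↦ A i v + a i` at the symbol sequence `x`, regarded as a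
linear function of the translations `a`. -/
def codingCLM (A : ι → E →L[ℝ] E) (x : ℕ → ι) : (ι → E) →L[ℝ] E :=
  ∑' n, prefixProd A x n ∘L ContinuousLinearMap.proj (x n)

lemma norm_prefixProd_comp_proj_le (A : ι → E →L[ℝ] E) (x : ℕ → ι) (n : ℕ) :
    ‖prefixProd A x n ∘L (ContinuousLinearMap.proj (x n) : (ι → E) →L[ℝ] E)‖ ≤ ‖A‖ ^ n := by
  have hproj : ‖(ContinuousLinearMap.proj (x n) : (ι → E) →L[ℝ] E)‖ ≤ 1 :=
    ContinuousLinearMap.opNorm_le_bound _ zero_le_one fun a => by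
      simpa using norm_le_pi_norm a (x n)
  have hprod := norm_prefixProd_le A x n
  calc _ ≤ _ * _ := ContinuousLinearMap.opNorm_comp_le _ _
    _ ≤ ‖A‖ ^ n * 1 := by gcongr
    _ = ‖A‖ ^ n := mul_one _

variable {A : ι → E →L[ℝ] E}

lemma norm_codingCLM_le (hA : ‖A‖ < 1) (x : ℕ → ι) : ‖codingCLM A x‖ ≤ (1 - ‖A‖)⁻¹ :=
  tsum_of_norm_bounded (hasSum_geometric_of_lt_one (norm_nonneg A) hA)
    (norm_prefixProd_comp_proj_le A x)

variable [CompleteSpace E]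

lemma summable_prefixProd_comp_proj (hA : ‖A‖ < 1) (x : ℕ → ι) :
    Summable fun n => prefixProd A x n ∘L (ContinuousLinearMap.proj (x n) : (ι → E) →L[ℝ] E) :=
  .of_norm_bounded (summable_geometric_of_lt_one (norm_nonneg A) hA)
    (norm_prefixProd_comp_proj_le A x)

lemma codingCLM_apply (hA : ‖A‖ < 1) (x : ℕ → ι) (a : ι → E) :
    codingCLM A x a = ∑' n, prefixProd A x n (a (x n)) :=
  (ContinuousLinearMap.apply ℝ E a).map_tsum (summable_prefixProd_comp_proj hA x)

lemma continuous_codingCLM [TopologicalSpace ι] [DiscreteTopology ι] (hA : ‖A‖ < 1) :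
    Continuous (codingCLM A) := by
  refine continuous_tsum (fun n => ?_) (summable_geometric_of_lt_one (norm_nonneg A) hA)
    fun n x => norm_prefixProd_comp_proj_le A x n
  have hproj : Continuous fun i : ι => (ContinuousLinearMap.proj i : (ι → E) →L[ℝ] E) :=
    continuous_of_discreteTopology
  exact (continuous_prefixProd A n).clm_comp (hproj.comp (continuous_apply n))

lemma codingCLM_eq_proj_add (hA : ‖A‖ < 1) (x : ℕ → ι) :
    codingCLM A x =
      ContinuousLinearMap.proj (x 0) + A (x 0) ∘L codingCLM A fun k => x (k + 1) := by
  rw [codingCLM, (summable_prefixProd_comp_proj hA x).tsum_eq_zero_add, prefixProd_zero]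
  congr 1
  simp only [prefixProd_succ]
  exact ((ContinuousLinearMap.compL ℝ (ι → E) E E (A (x 0))).map_tsum
    (summable_prefixProd_comp_proj hA _)).symm

lemma norm_codingCLM_sub_apply_sub_le (hA : ‖A‖ < 1) (x y : ℕ → ι) (w : ι → E) :
    ‖(codingCLM A x - codingCLM A y) w - (w (x 0) - w (y 0))‖ ≤
      2 * (‖A‖ / (1 - ‖A‖)) * ‖w‖ := by
  have htail (z : ℕ → ι) :
      ‖A (z 0) (codingCLM A (fun k => z (k + 1)) w)‖ ≤ ‖A‖ / (1 - ‖A‖) * ‖w‖ := by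
    rw [div_eq_mul_inv, mul_assoc]
    exact ContinuousLinearMap.le_of_opNorm_le_of_le _ (norm_le_pi_norm A _)
      (ContinuousLinearMap.le_of_opNorm_le _ (norm_codingCLM_le hA _) w)
  calc _ = ‖A (x 0) (codingCLM A (fun k => x (k + 1)) w) -
          A (y 0) (codingCLM A (fun k => y (k + 1)) w)‖ := by
        rw [codingCLM_eq_proj_add hA x, codingCLM_eq_proj_add hA y]
        simp only [_root_.sub_apply, _root_.add_apply, ContinuousLinearMap.proj_apply,
          ContinuousLinearMap.comp_apply, add_sub_add_comm, add_sub_cancel_left]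
    _ ≤ _ := (norm_sub_le _ _).trans (by linarith [htail x, htail y])

lemma codingCLM_sub_eq_prefixProd_comp (hA : ‖A‖ < 1) {x y : ℕ → ι} {n : ℕ}
    (hxy : ∀ k < n, x k = y k) :
    codingCLM A x - codingCLM A y = prefixProd A x n ∘L
      (codingCLM A (fun k => x (k + n)) - codingCLM A fun k => y (k + n)) := by
  induction n generalizing x y with
  | zero => simp only [prefixProd_zero, add_zero]; rfl
  | succ n ih =>
    rw [codingCLM_eq_proj_add hA x, codingCLM_eq_proj_add hA y, hxy 0 n.succ_pos,
      add_sub_add_left_eq_sub, ← ContinuousLinearMap.comp_sub,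
      ih fun k hk => hxy (k + 1) (Nat.succ_lt_succ hk), prefixProd_succ, hxy 0 n.succ_pos]
    simp only [add_assoc]
    rfl

end Coding

section Transversality

section SingleSubSingle

variable {ι E : Type*} [Fintype ι] [DecidableEq ι] [NormedAddCommGroup E]

lemma pi_norm_single_sub_single_le {i j : ι} (hij : i ≠ j) (ξ : E) :
    ‖(Pi.single i ξ - Pi.single j ξ : ι → E)‖ ≤ ‖ξ‖ := by
  refine (pi_norm_le_iff_of_nonneg (norm_nonneg _)).2 fun k => ?_
  rcases eq_or_ne k i with rfl | hki
  · simp [hij]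
  · rcases eq_or_ne k j with rfl | hkj <;> simp [*]

lemma piLp_norm_single_sub_single {i j : ι} (hij : i ≠ j) (ξ : E) :
    ‖WithLp.toLp 2 (Pi.single i ξ - Pi.single j ξ : ι → E)‖ = √2 * ‖ξ‖ := by
  rw [PiLp.norm_eq_of_L2, Fintype.sum_eq_add i j hij fun k hk => by simp [hk.1, hk.2],
    ← Real.sqrt_sq (norm_nonneg ξ), ← Real.sqrt_mul zero_le_two]
  simp [hij, hij.symm, two_mul]

end SingleSubSingle

variable {ι E : Type*} [NormedAddCommGroup E] [InnerProductSpace ℝ E] [CompleteSpace E]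
  {A : ι → E →L[ℝ] E}

lemma prod_mul_norm_le_norm_adjoint_prefixProd {r : ι → ℝ} (hr : ∀ i, 0 ≤ r i)
    (hrA : ∀ i v, r i * ‖v‖ ≤ ‖(A i).adjoint v‖) (x : ℕ → ι) (n : ℕ) (ξ : E) :
    (∏ k ∈ Finset.range n, r (x k)) * ‖ξ‖ ≤ ‖(prefixProd A x n).adjoint ξ‖ := by
  induction n generalizing x ξ with
  | zero =>
    rw [Finset.prod_range_zero, one_mul, prefixProd_zero, ContinuousLinearMap.one_def,
      ContinuousLinearMap.adjoint_id, ContinuousLinearMap.id_apply]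
  | succ n ih =>
    rw [prefixProd_succ, ContinuousLinearMap.mul_def, ContinuousLinearMap.adjoint_comp,
      ContinuousLinearMap.comp_apply]
    refine le_trans ?_ (ih _ _)
    rw [Finset.prod_range_succ', mul_assoc]
    exact mul_le_mul_of_nonneg_left (hrA _ _) (Finset.prod_nonneg fun _ _ => hr _)

variable [Fintype ι]

lemma le_norm_of_mul_norm_le_norm_adjoint [Nontrivial E] {r : ι → ℝ}
    (hrA : ∀ i v, r i * ‖v‖ ≤ ‖(A i).adjoint v‖) (i : ι) : r i ≤ ‖A‖ := by
  obtain ⟨v, hv⟩ := exists_ne (0 : E)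
  refine le_of_mul_le_mul_right ((hrA i v).trans ?_) (norm_pos_iff.2 hv)
  refine ((A i).adjoint.le_opNorm v).trans ?_
  gcongr
  exact (LinearIsometryEquiv.norm_map _ _).trans_le (norm_le_pi_norm A i)

/-- The coding map as a linear function on the Euclidean space of all translation tuples, which is
where adjoints and the standard Gaussian live. -/
def codingPiLp (A : ι → E →L[ℝ] E) (x : ℕ → ι) : PiLp 2 (fun _ : ι => E) →L[ℝ] E :=
  codingCLM A x ∘L PiLp.continuousLinearEquiv 2 ℝ (fun _ : ι => E)

/-- How far two codings with distinct first letters are separated when the linear parts have norm at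
most `ρ`. The bound `1 / 2` on the norms enters the argument through its positivity. -/
def separation (ρ : ℝ) : ℝ := √2 * (1 - ρ / (1 - ρ))

lemma separation_pos {ρ : ℝ} (hρ : ρ < 1 / 2) : 0 < separation ρ := by
  have : ρ / (1 - ρ) < 1 := (div_lt_one (by linarith)).2 (by linarith)
  exact mul_pos (by positivity) (sub_pos.2 this)

lemma separation_mul_norm_le_norm_adjoint_codingPiLp_sub (hA : ‖A‖ < 1) {x y : ℕ → ι}
    (hxy : x 0 ≠ y 0) (ξ : E) :
    separation ‖A‖ * ‖ξ‖ ≤ ‖(codingPiLp A x - codingPiLp A y).adjoint ξ‖ := by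
  classical
  set D := codingCLM A x - codingCLM A y
  -- The leading terms of the two codings add up to `2 • ξ` on `w`, so pairing with `w` bounds the
  -- adjoint from below.
  set w : ι → E := Pi.single (x 0) ξ - Pi.single (y 0) ξ with hw
  have hDw : ‖D w - (2 : ℝ) • ξ‖ ≤ 2 * (‖A‖ / (1 - ‖A‖)) * ‖ξ‖ := by
    have hbound := norm_codingCLM_sub_apply_sub_le hA x y w
    have hwdiff : w (x 0) - w (y 0) = (2 : ℝ) • ξ := by simp [hw, hxy, hxy.symm, two_smul]
    rw [hwdiff] at hbound
    exact hbound.trans (mul_le_mul_of_nonneg_left (pi_norm_single_sub_single_le hxy ξ)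
      (mul_nonneg zero_le_two (div_nonneg (norm_nonneg A) (sub_nonneg.2 hA.le))))
  rcases eq_or_ne ξ 0 with rfl | hξ
  · simp
  have hξpos : 0 < √2 * ‖ξ‖ := by positivity
  refine le_of_mul_le_mul_left ?_ hξpos
  calc √2 * ‖ξ‖ * (separation ‖A‖ * ‖ξ‖)
      = 2 * ‖ξ‖ ^ 2 - 2 * (‖A‖ / (1 - ‖A‖)) * ‖ξ‖ * ‖ξ‖ := by
        rw [separation]
        linear_combination (1 - ‖A‖ / (1 - ‖A‖)) * ‖ξ‖ ^ 2 * Real.sq_sqrt zero_le_two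
    _ ≤ inner ℝ ((2 : ℝ) • ξ) ξ + inner ℝ (D w - (2 : ℝ) • ξ) ξ := by
        rw [real_inner_smul_left, real_inner_self_eq_norm_sq]
        have := neg_le_of_abs_le (abs_real_inner_le_norm (D w - (2 : ℝ) • ξ) ξ)
        have := mul_le_mul_of_nonneg_right hDw (norm_nonneg ξ)
        linarith
    _ = inner ℝ (WithLp.toLp 2 w) ((codingPiLp A x - codingPiLp A y).adjoint ξ) := by
        rw [← inner_add_left, add_sub_cancel, ContinuousLinearMap.adjoint_inner_right]
        rfl
    _ ≤ √2 * ‖ξ‖ * ‖(codingPiLp A x - codingPiLp A y).adjoint ξ‖ :=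
        piLp_norm_single_sub_single hxy ξ ▸ real_inner_le_norm _ _

lemma prod_mul_separation_mul_norm_le (hA : ‖A‖ < 1 / 2) {r : ι → ℝ} (hr : ∀ i, 0 ≤ r i)
    (hrA : ∀ i v, r i * ‖v‖ ≤ ‖(A i).adjoint v‖) {x y : ℕ → ι} {n : ℕ}
    (hxy : ∀ k < n, x k = y k) (hn : x n ≠ y n) (ξ : E) :
    separation ‖A‖ * ((∏ k ∈ Finset.range n, r (x k)) * ‖ξ‖) ≤
      ‖(codingPiLp A x - codingPiLp A y).adjoint ξ‖ := by
  have hA1 : ‖A‖ < 1 := hA.trans one_half_lt_one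
  have hfactor : codingPiLp A x - codingPiLp A y = prefixProd A x n ∘L
      (codingPiLp A (fun k => x (k + n)) - codingPiLp A fun k => y (k + n)) := by
    simp only [codingPiLp, ← ContinuousLinearMap.sub_comp]
    rw [codingCLM_sub_eq_prefixProd_comp hA1 hxy]
    rfl
  calc separation ‖A‖ * ((∏ k ∈ Finset.range n, r (x k)) * ‖ξ‖)
      ≤ separation ‖A‖ * ‖(prefixProd A x n).adjoint ξ‖ :=
        mul_le_mul_of_nonneg_left (prod_mul_norm_le_norm_adjoint_prefixProd hr hrA x n ξ)
          (separation_pos hA).le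
    _ ≤ _ := by
        rw [hfactor, ContinuousLinearMap.adjoint_comp, ContinuousLinearMap.comp_apply]
        exact separation_mul_norm_le_norm_adjoint_codingPiLp_sub hA1 (by simpa using hn) _

end Transversality

section Energy

open scoped ENNReal

lemma exp_neg_mul_sq_le {κ q t : ℝ} (hκ : 0 < κ) (hq : 0 ≤ q) (ht : 0 ≤ t) :
    Real.exp (-(κ * t ^ 2)) ≤ Real.exp (q ^ 2 / (4 * κ)) * (1 + t) ^ (-q) := by
  have hlog : Real.log (1 + t) ≤ t := by
    linarith [Real.log_le_sub_one_of_pos (show 0 < 1 + t by linarith)]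
  have hsq : q ^ 2 / (4 * κ) - q * t + κ * t ^ 2 = (2 * κ * t - q) ^ 2 / (4 * κ) := by
    field_simp
    ring
  have hnonneg : 0 ≤ (2 * κ * t - q) ^ 2 / (4 * κ) := by positivity
  rw [Real.rpow_def_of_pos (by linarith), ← Real.exp_add, Real.exp_le_exp]
  linarith [mul_le_mul_of_nonneg_left hlog hq]

lemma exp_neg_mul_mul_sq_le {κ q t u : ℝ} (hκ : 0 < κ) (hq : 0 ≤ q) (ht : 0 < t) (ht1 : t ≤ 1)
    (hu : 0 ≤ u) :
    Real.exp (-(κ * (t * u) ^ 2)) ≤ Real.exp (q ^ 2 / (4 * κ)) * (1 + u) ^ (-q) * t ^ (-q) := by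
  have hle : t * (1 + u) ≤ 1 + t * u := by linarith
  calc Real.exp (-(κ * (t * u) ^ 2))
      ≤ Real.exp (q ^ 2 / (4 * κ)) * (1 + t * u) ^ (-q) :=
        exp_neg_mul_sq_le hκ hq (by positivity)
    _ ≤ Real.exp (q ^ 2 / (4 * κ)) * (t * (1 + u)) ^ (-q) :=
        mul_le_mul_of_nonneg_left
          (Real.rpow_le_rpow_of_nonpos (by positivity) hle (neg_nonpos.2 hq)) (Real.exp_pos _).le
    _ = Real.exp (q ^ 2 / (4 * κ)) * (1 + u) ^ (-q) * t ^ (-q) := by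
        rw [Real.mul_rpow ht.le (by positivity)]
        ring

variable {ι E : Type*} [Fintype ι] [NormedAddCommGroup E] [InnerProductSpace ℝ E]
  [CompleteSpace E] {A : ι → E →L[ℝ] E} {r : ι → ℝ} {q : ℝ}

lemma ofReal_exp_neg_adjoint_codingPiLp_sub_le [DecidableEq ι] (hA : ‖A‖ < 1 / 2)
    (hr0 : ∀ i, 0 < r i) (hr1 : ∀ i, r i ≤ 1) (hrA : ∀ i v, r i * ‖v‖ ≤ ‖(A i).adjoint v‖)
    (hq : 0 ≤ q) (x y : ℕ → ι) (ξ : E) :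
    ENNReal.ofReal (Real.exp (-‖(codingPiLp A x - codingPiLp A y).adjoint ξ‖ ^ 2 / 2)) ≤
      ENNReal.ofReal (Real.exp (q ^ 2 / (2 * separation ‖A‖ ^ 2)) * (1 + ‖ξ‖) ^ (-q)) *
        prefixKernel (fun i => ENNReal.ofReal (r i ^ (-q))) x y := by
  rcases eq_or_ne x y with rfl | hxy
  · have hself := prefixKernel_self (c := fun i => ENNReal.ofReal (r i ^ (-q)))
      (fun i => ENNReal.one_le_ofReal.2
        (Real.one_le_rpow_of_pos_of_le_one_of_nonpos (hr0 i) (hr1 i) (neg_nonpos.2 hq))) x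
    rw [hself, ENNReal.mul_top (ENNReal.ofReal_pos.2 (by positivity)).ne']
    exact le_top
  set n := PiNat.firstDiff x y
  set t := ∏ k ∈ Finset.range n, r (x k)
  have ht0 : 0 < t := Finset.prod_pos fun _ _ => hr0 _
  have ht1 : t ≤ 1 := Finset.prod_le_one (fun _ _ => (hr0 _).le) fun _ _ => hr1 _
  have hsep := separation_pos hA
  have hprefix (k : ℕ) (hk : k < n) : x k = y k := PiNat.apply_eq_of_lt_firstDiff hk
  have hadjoint := prod_mul_separation_mul_norm_le hA (fun i => (hr0 i).le) hrA hprefix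
    (PiNat.apply_firstDiff_ne hxy) ξ
  have hexp : Real.exp (-‖(codingPiLp A x - codingPiLp A y).adjoint ξ‖ ^ 2 / 2) ≤
      Real.exp (q ^ 2 / (2 * separation ‖A‖ ^ 2)) * (1 + ‖ξ‖) ^ (-q) * t ^ (-q) :=
    calc Real.exp (-‖(codingPiLp A x - codingPiLp A y).adjoint ξ‖ ^ 2 / 2)
        ≤ Real.exp (-(separation ‖A‖ ^ 2 / 2 * (t * ‖ξ‖) ^ 2)) := by
          rw [Real.exp_le_exp]
          have := pow_le_pow_left₀ (by positivity) hadjoint 2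
          linarith
      _ ≤ _ := by
          have := exp_neg_mul_mul_sq_le (half_pos (pow_pos hsep 2)) hq ht0 ht1 (norm_nonneg ξ)
          rwa [show 4 * (separation ‖A‖ ^ 2 / 2) = 2 * separation ‖A‖ ^ 2 by ring] at this
  refine (ENNReal.ofReal_le_ofReal hexp).trans ?_
  rw [ENNReal.ofReal_mul (by positivity), ← Real.finsetProd_rpow _ _ fun _ _ => (hr0 _).le,
    ENNReal.ofReal_prod_of_nonneg fun _ _ => Real.rpow_nonneg (hr0 _).le _]
  exact mul_le_mul_right (prod_le_prefixKernel _ hprefix) _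

lemma exists_integral_exp_neg_adjoint_codingPiLp_sub_le [MeasurableSpace ι]
    [MeasurableSingletonClass ι] (hA : ‖A‖ < 1 / 2)
    (hr0 : ∀ i, 0 < r i) (hr1 : ∀ i, r i ≤ 1) (hrA : ∀ i v, r i * ‖v‖ ≤ ‖(A i).adjoint v‖)
    (hq : 0 ≤ q) {ν : Measure ι} [IsProbabilityMeasure ν]
    (hν : ∑ i, ν {i} ^ 2 * ENNReal.ofReal (r i ^ (-q)) < 1) :
    ∃ B : ℝ, ∀ ξ : E,
      ∫ p, Real.exp (-‖(codingPiLp A p.1 - codingPiLp A p.2).adjoint ξ‖ ^ 2 / 2)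
          ∂(Measure.infinitePi fun _ : ℕ => ν).prod (Measure.infinitePi fun _ => ν) ≤
        B * (1 + ‖ξ‖) ^ (-q) := by
  classical
  set μ : Measure (ℕ → ι) := Measure.infinitePi fun _ => ν
  set S := ∑ i, ν {i} ^ 2 * ENNReal.ofReal (r i ^ (-q))
  set C := Real.exp (q ^ 2 / (2 * separation ‖A‖ ^ 2))
  refine ⟨C * ((1 - S)⁻¹).toReal, fun ξ => ?_⟩
  set f : (ℕ → ι) × (ℕ → ι) → ℝ := fun p =>
    Real.exp (-‖(codingPiLp A p.1 - codingPiLp A p.2).adjoint ξ‖ ^ 2 / 2)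
  have hS : (1 - S)⁻¹ ≠ ∞ := ENNReal.inv_ne_top.2 (tsub_pos_of_lt hν).ne'
  have hlintegral : ENNReal.ofReal (∫ p, f p ∂μ.prod μ) ≤
      ENNReal.ofReal (C * (1 + ‖ξ‖) ^ (-q)) * (1 - S)⁻¹ :=
    calc ENNReal.ofReal (∫ p, f p ∂μ.prod μ) = ‖∫ p, f p ∂μ.prod μ‖ₑ :=
          (Real.enorm_of_nonneg (integral_nonneg fun _ => (Real.exp_pos _).le)).symm
      _ ≤ ∫⁻ p, ‖f p‖ₑ ∂μ.prod μ := enorm_integral_le_lintegral_enorm f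
      _ ≤ ∫⁻ p, ENNReal.ofReal (C * (1 + ‖ξ‖) ^ (-q)) *
            prefixKernel (fun i => ENNReal.ofReal (r i ^ (-q))) p.1 p.2 ∂μ.prod μ := by
          refine lintegral_mono fun p => ?_
          rw [Real.enorm_of_nonneg (Real.exp_pos _).le]
          exact ofReal_exp_neg_adjoint_codingPiLp_sub_le hA hr0 hr1 hrA hq p.1 p.2 ξ
      _ = ENNReal.ofReal (C * (1 + ‖ξ‖) ^ (-q)) * (1 - S)⁻¹ := by
          rw [lintegral_const_mul' _ _ ENNReal.ofReal_ne_top, lintegral_prefixKernel]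
  calc ∫ p, f p ∂μ.prod μ ≤ (ENNReal.ofReal (C * (1 + ‖ξ‖) ^ (-q)) * (1 - S)⁻¹).toReal :=
        (ENNReal.ofReal_le_iff_le_toReal (ENNReal.mul_ne_top ENNReal.ofReal_ne_top hS)).1
          hlintegral
    _ = C * ((1 - S)⁻¹).toReal * (1 + ‖ξ‖) ^ (-q) := by
        rw [ENNReal.toReal_mul, ENNReal.toReal_ofReal (by positivity)]
        ring

end Energy

section Weights

variable {ι : Type*} [Fintype ι] {r : ι → ℝ}

lemma exists_gt_sum_sq_div_mul_rpow_lt_one (hr : ∀ i, 0 < r i) (hsum : 1 < ∑ i, r i ^ (2 * d)) :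
    ∃ s : ℝ, d < s ∧ ∑ i, (r i ^ (2 * d) / ∑ j, r j ^ (2 * d)) ^ 2 * r i ^ (-(2 * s)) < 1 := by
  set S := ∑ j, r j ^ (2 * d) with hS
  have hcont : Continuous fun s : ℝ => ∑ i, (r i ^ (2 * d) / S) ^ 2 * r i ^ (-(2 * s)) :=
    continuous_finsetSum _ fun i _ => continuous_const.mul
      (continuous_const.rpow (by fun_prop) fun _ => Or.inl (hr i).ne')
  have hterm (i : ι) : (r i ^ (2 * d) / S) ^ 2 * r i ^ (-(2 * d : ℝ)) = r i ^ (2 * d) / S ^ 2 := by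
    have hrpow : r i ^ (2 * d : ℝ) = r i ^ (2 * d) := by exact_mod_cast Real.rpow_natCast _ _
    have := hr i
    rw [Real.rpow_neg (hr i).le, hrpow]
    field_simp
  have hlt : ∑ i, (r i ^ (2 * d) / S) ^ 2 * r i ^ (-(2 * d : ℝ)) < 1 := by
    simp only [hterm]
    rw [← Finset.sum_div, ← hS, div_lt_one (by positivity)]
    exact lt_self_pow₀ hsum one_lt_two
  have hnear : ∀ᶠ s in nhdsWithin (d : ℝ) (Set.Ioi d),
      ∑ i, (r i ^ (2 * d) / S) ^ 2 * r i ^ (-(2 * s)) < 1 :=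
    (hcont.continuousAt.eventually_lt continuousAt_const hlt).filter_mono nhdsWithin_le_nhds
  exact (eventually_mem_nhdsWithin.and hnear).exists

lemma exists_isProbabilityMeasure_sum_sq_mul_rpow_lt_one [MeasurableSpace ι]
    [MeasurableSingletonClass ι] (hr : ∀ i, 0 < r i) (hsum : 1 < ∑ i, r i ^ (2 * d)) :
    ∃ ν : Measure ι, IsProbabilityMeasure ν ∧ ∃ s : ℝ, d < s ∧
      ∑ i, ν {i} ^ 2 * ENNReal.ofReal (r i ^ (-(2 * s))) < 1 := by
  obtain ⟨s, hs, hlt⟩ := exists_gt_sum_sq_div_mul_rpow_lt_one hr hsum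
  set S := ∑ j, r j ^ (2 * d) with hS
  have hweight (i : ι) : 0 ≤ r i ^ (2 * d) / S := by
    have := hr i
    positivity
  let ν : PMF ι := PMF.ofFintype (fun i => ENNReal.ofReal (r i ^ (2 * d) / S)) <| by
    rw [← ENNReal.ofReal_sum_of_nonneg fun i _ => hweight i, ← Finset.sum_div, ← hS,
      div_self (one_pos.trans hsum).ne', ENNReal.ofReal_one]
  have hterm (i : ι) : 0 ≤ (r i ^ (2 * d) / S) ^ 2 * r i ^ (-(2 * s)) :=
    mul_nonneg (sq_nonneg _) (Real.rpow_nonneg (hr i).le _)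
  refine ⟨ν.toMeasure, inferInstance, s, hs, ?_⟩
  calc ∑ i, ν.toMeasure {i} ^ 2 * ENNReal.ofReal (r i ^ (-(2 * s)))
      = ENNReal.ofReal (∑ i, (r i ^ (2 * d) / S) ^ 2 * r i ^ (-(2 * s))) := by
        rw [ENNReal.ofReal_sum_of_nonneg fun i _ => hterm i]
        refine Finset.sum_congr rfl fun i _ => ?_
        rw [PMF.toMeasure_apply_singleton _ _ (measurableSet_singleton i), PMF.ofFintype_apply,
          ENNReal.ofReal_mul (sq_nonneg _), ENNReal.ofReal_pow (hweight i)]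
    _ < 1 := ENNReal.ofReal_lt_one.2 hlt

end Weights

section TypicalTranslations

variable {ι E : Type*} [Fintype ι] [NormedAddCommGroup E] [InnerProductSpace ℝ E]
  [FiniteDimensional ℝ E] [MeasurableSpace E] [BorelSpace E] {A : ι → E →L[ℝ] E} {r : ι → ℝ}

lemma ae_pi_of_ae_piLp {p : (ι → E) → Prop} (hp : ∀ᵐ h : PiLp 2 (fun _ : ι => E), p h.ofLp) :
    ∀ᵐ a : ι → E, p a := by
  set e := (PiLp.continuousLinearEquiv 2 ℝ fun _ : ι => E)
  have hHaar : (volume.map e).IsAddHaarMeasure := e.isAddHaarMeasure_map volume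
  exact (Measure.absolutelyContinuous_isAddHaarMeasure volume (volume.map e)).ae_le
    ((e.toHomeomorph.measurableEmbedding.ae_map_iff).2 hp)

section Measurability

variable [TopologicalSpace ι] [DiscreteTopology ι] [MeasurableSpace ι] [BorelSpace ι]

lemma measurable_uncurry_codingPiLp (hA : ‖A‖ < 1) :
    Measurable (Function.uncurry fun x => (codingPiLp A x : PiLp 2 (fun _ : ι => E) → E)) := by
  have hcont : Continuous (codingPiLp A) := (continuous_codingCLM hA).clm_comp continuous_const
  exact ((hcont.comp continuous_fst).clm_apply continuous_snd).measurable

lemma interior_range_codingCLM_nonempty (hA : ‖A‖ < 1) (a : ι → E) (μ : Measure (ℕ → ι))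
    [IsProbabilityMeasure μ] (hint : Integrable (charFun (μ.map fun x => codingCLM A x a))) :
    (interior (Set.range fun x => codingCLM A x a)).Nonempty := by
  have hcont : Continuous fun x => codingCLM A x a :=
    (continuous_codingCLM hA).clm_apply continuous_const
  have hclosed : IsClosed (Set.range fun x => codingCLM A x a) := (isCompact_range hcont).isClosed
  have hprob := Measure.isProbabilityMeasure_map (μ := μ) hcont.aemeasurable
  refine interior_nonempty_of_integrable_charFun hint hclosed ?_
  rw [Measure.map_apply hcont.measurable hclosed.measurableSet.compl, Set.preimage_compl,
    Set.preimage_range, Set.compl_univ, measure_empty]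

end Measurability

theorem ae_interior_range_codingCLM_nonempty [Nontrivial E] (hA : ‖A‖ < 1 / 2)
    (hr : ∀ i, 0 < r i) (hrA : ∀ i v, r i * ‖v‖ ≤ ‖(A i).adjoint v‖)
    (hsum : 1 < ∑ i, r i ^ (2 * Module.finrank ℝ E)) :
    ∀ᵐ a : ι → E, (interior (Set.range fun x => codingCLM A x a)).Nonempty := by
  let _ : TopologicalSpace ι := ⊥
  have _ : DiscreteTopology ι := ⟨rfl⟩
  let _ : MeasurableSpace ι := borel ι
  have _ : BorelSpace ι := ⟨rfl⟩
  have hA1 : ‖A‖ < 1 := hA.trans one_half_lt_one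
  have hr1 (i : ι) : r i ≤ 1 := (le_norm_of_mul_norm_le_norm_adjoint hrA i).trans hA1.le
  obtain ⟨ν, _, s, hs, hν⟩ := exists_isProbabilityMeasure_sum_sq_mul_rpow_lt_one hr hsum
  have hs0 : 0 ≤ 2 * s := by linarith [(Nat.cast_nonneg _).trans hs.le]
  obtain ⟨B, hB⟩ := exists_integral_exp_neg_adjoint_codingPiLp_sub_le hA hr hr1 hrA hs0 hν
  refine ae_pi_of_ae_piLp ?_
  filter_upwards [ae_integrable_charFun_map (measurable_uncurry_codingPiLp hA1) hs hB] with h hh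
  exact interior_range_codingCLM_nonempty hA1 h.ofLp (.infinitePi fun _ => ν) hh

end TypicalTranslations

section Matrices

open Matrix

lemma toEuclideanCLM_wordProd (T : Fin m → Matrix (Fin d) (Fin d) ℝ) (x : ℕ → Fin m) (n : ℕ) :
    toEuclideanCLM (𝕜 := ℝ) (wordProd T fun k : Fin n => x k) =
      prefixProd (fun i => toEuclideanCLM (𝕜 := ℝ) (T i)) x n := by
  rw [wordProd, map_list_prod, List.map_ofFn]
  rfl

lemma attractor_eq_range_codingCLM {T : Fin m → Matrix (Fin d) (Fin d) ℝ}
    (hT : ‖fun i => toEuclideanCLM (𝕜 := ℝ) (T i)‖ < 1) (a : Fin m → EuclideanSpace ℝ (Fin d)) :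
    attractor T a =
      Set.range fun x => codingCLM (fun i => toEuclideanCLM (𝕜 := ℝ) (T i)) x a := by
  refine congrArg Set.range (funext fun x => ?_)
  rw [codingCLM_apply hT, codingMap]
  simp only [toEuclideanCLM_wordProd]

lemma alphaMin_mul_norm_le_norm_adjoint {M : Matrix (Fin d) (Fin d) ℝ} (hM : IsUnit M.det)
    (v : EuclideanSpace ℝ (Fin d)) :
    alphaMin M * ‖v‖ ≤ ‖(toEuclideanCLM (𝕜 := ℝ) M).adjoint v‖ := by
  have hinv : (toEuclideanCLM (𝕜 := ℝ) M⁻¹).adjoint ∘L (toEuclideanCLM (𝕜 := ℝ) M).adjoint = 1 := by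
    rw [← ContinuousLinearMap.adjoint_comp, ← ContinuousLinearMap.mul_def, ← map_mul,
      mul_nonsing_inv M hM, map_one]
    exact ContinuousLinearMap.adjoint_id
  rw [alphaMin, mul_comm, ← div_eq_mul_inv]
  refine div_le_of_le_mul₀ (norm_nonneg _) (norm_nonneg _) ?_
  calc ‖v‖ = ‖(toEuclideanCLM (𝕜 := ℝ) M⁻¹).adjoint ((toEuclideanCLM (𝕜 := ℝ) M).adjoint v)‖ :=
        congrArg norm (DFunLike.congr_fun hinv v).symm
    _ ≤ ‖(toEuclideanCLM (𝕜 := ℝ) M⁻¹).adjoint‖ * ‖(toEuclideanCLM (𝕜 := ℝ) M).adjoint v‖ :=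
        ContinuousLinearMap.le_opNorm _ _
    _ = ‖(toEuclideanCLM (𝕜 := ℝ) M).adjoint v‖ * opNorm M⁻¹ := by
        rw [LinearIsometryEquiv.norm_map, mul_comm, opNorm]

lemma alphaMin_pos [NeZero d] {M : Matrix (Fin d) (Fin d) ℝ} (hM : IsUnit M.det) :
    0 < alphaMin M := by
  have hunit : IsUnit M⁻¹ := isUnit_nonsing_inv_iff.2 ((isUnit_iff_isUnit_det M).2 hM)
  exact inv_pos.2 (norm_pos_iff.2 (hunit.map (toEuclideanCLM (n := Fin d) (𝕜 := ℝ))).ne_zero)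

lemma opNorm_of_mem_orthogonalGroup [NeZero d] {O : Matrix (Fin d) (Fin d) ℝ}
    (hO : O ∈ orthogonalGroup (Fin d) ℝ) : opNorm O = 1 :=
  CStarRing.norm_of_mem_unitary (Unitary.map_mem (toEuclideanCLM (n := Fin d) (𝕜 := ℝ)) hO)

lemma alphaMin_smul_of_mem_orthogonalGroup [NeZero d] (c : ℝ) {O : Matrix (Fin d) (Fin d) ℝ}
    (hO : O ∈ orthogonalGroup (Fin d) ℝ) : alphaMin (c • O) = |c| := by
  rcases eq_or_ne c 0 with rfl | hc
  · simp [alphaMin, opNorm]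
  have hinv : (c • O)⁻¹ = c⁻¹ • star O := by
    refine inv_eq_right_inv ?_
    rw [smul_mul_smul_comm, mul_inv_cancel₀ hc, one_smul, (Unitary.mem_iff.1 hO).2]
  have hstar : opNorm (star O) = 1 := opNorm_of_mem_orthogonalGroup (Unitary.star_mem hO)
  rw [opNorm] at hstar
  rw [alphaMin, hinv, opNorm, map_smul, norm_smul, hstar, mul_one, norm_inv, inv_inv,
    Real.norm_eq_abs]

lemma abs_det_of_mem_orthogonalGroup {O : Matrix (Fin d) (Fin d) ℝ}
    (hO : O ∈ orthogonalGroup (Fin d) ℝ) : |O.det| = 1 := by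
  have hdet := (Unitary.mem_iff.1 (det_of_mem_unitary hO)).1
  exact (abs_eq zero_le_one).2 (mul_self_eq_one_iff.1 hdet)

lemma alphaMin_pow_eq_abs_det {M : Matrix (Fin d) (Fin d) ℝ}
    (hM : ∃ (c : ℝ) (O : Matrix (Fin d) (Fin d) ℝ), O ∈ orthogonalGroup (Fin d) ℝ ∧ M = c • O) :
    alphaMin M ^ d = |M.det| := by
  obtain ⟨c, O, hO, rfl⟩ := hM
  rw [det_smul, abs_mul, abs_pow, abs_det_of_mem_orthogonalGroup hO, mul_one, Fintype.card_fin]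
  rcases eq_zero_or_neZero d with rfl | _
  · simp only [pow_zero]
  · rw [alphaMin_smul_of_mem_orthogonalGroup c hO]

end Matrices

theorem typical_selfAffine_nonempty_interior_of_scalar_orthogonal_general
    (T : Fin m → Matrix (Fin d) (Fin d) ℝ)
    (hinv : ∀ i, IsUnit (T i).det)
    (hnorm : ∀ i, opNorm (T i) < 1 / 2)
    (hsum : 1 < ∑ i : Fin m, alphaMin (T i) ^ (2 * d)) :
    ∀ᵐ a ∂(volume : Measure (Fin m → EuclideanSpace ℝ (Fin d))),
      (interior (attractor T a)).Nonempty := by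
  rcases eq_zero_or_neZero d with rfl | _
  · have : NeZero m := ⟨by rintro rfl; norm_num at hsum⟩
    refine .of_forall fun a => ?_
    rw [(Set.range_nonempty (codingMap T a)).eq_univ (s := attractor T a), interior_univ]
    exact Set.univ_nonempty
  · have hT : ‖fun i => Matrix.toEuclideanCLM (𝕜 := ℝ) (T i)‖ < 1 / 2 :=
      (pi_norm_lt_iff one_half_pos).2 hnorm
    simp only [attractor_eq_range_codingCLM (hT.trans one_half_lt_one)]
    refine ae_interior_range_codingCLM_nonempty hT (fun i => alphaMin_pos (hinv i))
      (fun i => alphaMin_mul_norm_le_norm_adjoint (hinv i)) ?_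
    rwa [finrank_euclideanSpace_fin]

/-- **Corollary 1.2(ii).** If `‖T_i‖ < 1/2` for all `i`, each `T_i` is a scalar multiple
of an orthogonal matrix, and `∑_i |det T_i|² > 1`, then for Lebesgue-a.e. `a ∈ ℝ^{md}`
the self-affine set `K^a` has non-empty interior. -/
theorem typical_selfAffine_nonempty_interior_of_scalar_orthogonal
    (T : Fin m → Matrix (Fin d) (Fin d) ℝ)
    (hinv : ∀ i, IsUnit (T i).det)
    (hnorm : ∀ i, opNorm (T i) < 1 / 2)
    (horth : ∀ i, ∃ (c : ℝ) (O : Matrix (Fin d) (Fin d) ℝ),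
      O ∈ Matrix.orthogonalGroup (Fin d) ℝ ∧ T i = c • O)
    (hsum : 1 < ∑ i : Fin m, |(T i).det| ^ 2) :
    ∀ᵐ a ∂(volume : Measure (Fin m → EuclideanSpace ℝ (Fin d))),
      (interior (attractor T a)).Nonempty := by
  simp only [← alphaMin_pow_eq_abs_det (horth _), ← pow_mul, mul_comm d] at hsum
  exact typical_selfAffine_nonempty_interior_of_scalar_orthogonal_general T hinv hnorm hsum

end SelfAffine
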